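/- (Quasi power theorem of Hwang.) Let (Ω_n)_{n≥1} be a sequence of integer-valued random variables, let τ > 0, and suppose the moment generating functions M_n(s) := E(e^{Ω_n s}) exist for all complex s with |s| ≤ τ and satisfy M_n(s) = e^{u(s)φ(n) + v(s)}·(1 + O(κ_n^{−1})) uniformly for |s| ≤ τ, where: u and v are analytic on the closed disk |s| ≤ τ and independent of n; u'(0) and u''(0) are real with u''(0) > 0; φ(n) → ∞ and φ(n) > 0; κ_n → ∞. Then the distribution of Ω_n is asymptotically Gaussian: P{(Ω_n − u'(0)φ(n))/√(u''(0)φ(n)) < x} = Φ_N(x) + O(1/κ_n + 1/√(φ(n))) uniformly in x ∈ ℝ; moreover E(Ω_n) = u'(0)φ(n) + v'(0) + O(κ_n^{−1}) and V(Ω_n) = u''(0)φ(n) + v''(0) + O(κ_n^{−1}). -/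

import Mathlib

open MeasureTheory

/-- The standard normal distribution function `Φ_N(x) = (2π)^{−1/2}·∫_{−∞}^x e^{−t²/2} dt`. -/
noncomputable def stdNormalCDF (x : ℝ) : ℝ :=
  (Real.sqrt (2 * Real.pi))⁻¹ * ∫ t in Set.Iio x, Real.exp (-(t ^ 2) / 2)


noncomputable def qpJ (y z : ℝ) : ℝ :=
  (Set.Ioc y 0).indicator (fun _ => (1:ℝ)) z - (Set.Ioc 0 y).indicator (fun _ => (1:ℝ)) z

lemma qpJ_eq (y z : ℝ) : qpJ y z = (Set.Iio z).indicator (fun _ => (1:ℝ)) y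
    - (Set.Ioi (0:ℝ)).indicator (fun _ => (1:ℝ)) z := by
  unfold qpJ
  simp only [Set.indicator_apply, Set.mem_Ioc, Set.mem_Iio, Set.mem_Ioi]
  split_ifs <;> first | (exfalso; grind) | norm_num

lemma qpJ_meas : Measurable (Function.uncurry qpJ) := by
  have : Function.uncurry qpJ = fun p : ℝ × ℝ => ({p : ℝ × ℝ | p.1 < p.2}).indicator (fun _ => (1:ℝ)) p
    - (Set.Ioi (0:ℝ)).indicator (fun _ => (1:ℝ)) p.2 := by
    ext ⟨y, z⟩
    simp only [Function.uncurry, qpJ_eq]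
    rfl
  rw [this]
  apply Measurable.sub
  · exact measurable_const.indicator (measurableSet_lt measurable_fst measurable_snd)
  · exact (measurable_const.indicator measurableSet_Ioi).comp measurable_snd

lemma qpJ_int (q : ℝ → ℝ) (hq : Continuous q) (y : ℝ) :
    Integrable (fun z => qpJ y z * q z) ∧ ∫ z, qpJ y z * q z = ∫ z in y..0, q z := by
  have h : (fun z => qpJ y z * q z) = fun z => (Set.Ioc y 0).indicator q z - (Set.Ioc 0 y).indicator q z := by
    ext z; unfold qpJ; simp only [Set.indicator_apply]; split_ifs <;> ring
  rw [h]
  have i1 : Integrable ((Set.Ioc y 0).indicator q) :=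
    (integrable_indicator_iff measurableSet_Ioc).2 (hq.integrableOn_Icc.mono_set Set.Ioc_subset_Icc_self)
  have i2 : Integrable ((Set.Ioc 0 y).indicator q) :=
    (integrable_indicator_iff measurableSet_Ioc).2 (hq.integrableOn_Icc.mono_set Set.Ioc_subset_Icc_self)
  refine ⟨i1.sub i2, ?_⟩
  rw [integral_sub i1 i2, integral_indicator measurableSet_Ioc, integral_indicator measurableSet_Ioc,
    intervalIntegral]

lemma qpJ_abs (y z : ℝ) : |qpJ y z| = (Set.uIoc y 0).indicator (fun _ => (1:ℝ)) z := by
  unfold qpJ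
  rcases le_total y 0 with h | h
  · rw [Set.uIoc_of_le h, show Set.Ioc (0:ℝ) y = ∅ from Set.Ioc_eq_empty (not_lt.2 h)]
    simp only [Set.indicator_apply, Set.mem_empty_iff_false, if_false]; split_ifs <;> simp
  · rw [Set.uIoc_of_ge h, show Set.Ioc y (0:ℝ) = ∅ from Set.Ioc_eq_empty (not_lt.2 h)]
    simp only [Set.indicator_apply, Set.mem_empty_iff_false, if_false]; split_ifs <;> simp

noncomputable def qpD (ν : Measure ℝ) (z : ℝ) : ℝ :=
  ν.real (Set.Iio z) - (Set.Ioi (0:ℝ)).indicator (fun _ => (1:ℝ)) z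

lemma qpD_eq (ν : Measure ℝ) [IsProbabilityMeasure ν] (z : ℝ) : qpD ν z = ∫ y, qpJ y z ∂ν := by
  simp_rw [qpJ_eq]
  rw [integral_sub ((integrable_const _).indicator measurableSet_Iio) (integrable_const _),
    integral_indicator measurableSet_Iio]
  simp [qpD]

lemma qpJ_prod (ν : Measure ℝ) [IsProbabilityMeasure ν] (hν : Integrable (fun y => y) ν)
    (q : ℝ → ℝ) (hq : Continuous q) (hqb : ∀ z, |q z| ≤ 1) :
    Integrable (Function.uncurry fun y z => qpJ y z * q z) (ν.prod volume) := by
  rw [integrable_prod_iff]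
  · refine ⟨Filter.Eventually.of_forall fun y => (qpJ_int q hq y).1, ?_⟩
    refine Integrable.mono hν ?_ (Filter.Eventually.of_forall fun y => ?_)
    · have : Measurable (Function.uncurry fun y z => ‖qpJ y z * q z‖) :=
        (qpJ_meas.mul (hq.measurable.comp measurable_snd)).norm
      exact (this.stronglyMeasurable.integral_prod_right).aestronglyMeasurable
    · rw [Real.norm_eq_abs, abs_of_nonneg (integral_nonneg fun z => norm_nonneg _)]
      simp only [Function.uncurry]
      calc ∫ z, ‖qpJ y z * q z‖ ≤ ∫ z, (Set.uIoc y 0).indicator (fun _ => (1:ℝ)) z := by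
            apply integral_mono_of_nonneg
            · exact Filter.Eventually.of_forall fun z => norm_nonneg _
            · exact (integrable_indicator_iff measurableSet_uIoc).2 (by simp [Set.uIoc])
            · refine Filter.Eventually.of_forall fun z => ?_
              simp only [norm_mul, Real.norm_eq_abs]
              rw [← qpJ_abs]
              exact mul_le_of_le_one_right (abs_nonneg _) (hqb z)
        _ = ‖y‖ := by
            rw [integral_indicator measurableSet_uIoc]; simp [Set.uIoc, measureReal_def]
            rcases le_total y 0 with h | h
            · simp [h, abs_of_nonpos h]
            · simp [h, abs_of_nonneg h]
  · exact (qpJ_meas.mul (hq.measurable.comp measurable_snd)).aestronglyMeasurable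

/-- integration by parts against the centred distribution function -/
lemma qpD_int (ν : Measure ℝ) [IsProbabilityMeasure ν] (hν : Integrable (fun y => y) ν)
    (q Q : ℝ → ℝ) (hq : Continuous q) (hqb : ∀ z, |q z| ≤ 1) (hQ : ∀ z, HasDerivAt Q (q z) z) :
    Integrable (fun z => qpD ν z * q z) ∧ ∫ z, qpD ν z * q z = ∫ y, (Q 0 - Q y) ∂ν := by
  have h := qpJ_prod ν hν q hq hqb
  have e : (fun z => qpD ν z * q z) = fun z => ∫ y, qpJ y z * q z ∂ν := by
    ext z; rw [integral_mul_const, qpD_eq]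
  rw [e]
  refine ⟨h.integral_prod_right, ?_⟩
  rw [← integral_integral_swap h]
  congr 1; ext y
  rw [(qpJ_int q hq y).2, intervalIntegral.integral_eq_sub_of_hasDerivAt (fun z _ => hQ z)
    (hq.intervalIntegrable _ _)]

/-- Kernel -/
noncomputable def qpK (y : ℝ) : ℝ := 2 * (1 - Real.cos y) / y ^ 2

lemma qpK_nonneg (y : ℝ) : 0 ≤ qpK y := by
  unfold qpK
  have := Real.cos_le_one y
  have : 0 ≤ 1 - Real.cos y := by linarith
  positivity

lemma qpK_meas : Measurable qpK := by unfold qpK; fun_prop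

lemma qpK_rep (y : ℝ) (hy : y ≠ 0) : qpK y = ∫ t in (0:ℝ)..1, 2 * (1 - t) * Real.cos (t * y) := by
  have h : ∀ t : ℝ, HasDerivAt (fun t => 2 * ((1 - t) * (Real.sin (t * y) / y) - Real.cos (t * y) / y ^ 2))
      (2 * (1 - t) * Real.cos (t * y)) t := by
    intro t
    have h1 : HasDerivAt (fun t : ℝ => t * y) y t := by simpa using (hasDerivAt_id t).mul_const y
    have h2 := h1.sin.div_const y
    have h3 := h1.cos.div_const (y ^ 2)
    have h4 : HasDerivAt (fun t : ℝ => 1 - t) (-1) t := by simpa using (hasDerivAt_id t).const_sub 1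
    have h5 := ((h4.mul h2).sub h3).const_mul 2
    convert! h5 using 1
    field_simp
    ring
  rw [intervalIntegral.integral_eq_sub_of_hasDerivAt (fun t _ => h t)
    (Continuous.intervalIntegrable (by fun_prop) _ _)]
  simp [qpK]
  ring

lemma qpK_integrable : Integrable qpK := by
  refine Integrable.mono' ((integrable_inv_one_add_sq).const_mul 8) qpK_meas.aestronglyMeasurable ?_
  have : ∀ᵐ y : ℝ, y ≠ 0 := by simp [ae_iff]
  filter_upwards [this] with y hy
  rw [Real.norm_eq_abs, abs_of_nonneg (qpK_nonneg y)]
  unfold qpK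
  have h1 := Real.neg_one_le_cos y
  have h2 := Real.one_sub_sq_div_two_le_cos (x := y)
  have hy2 : 0 < y ^ 2 := by positivity
  rw [div_le_iff₀ hy2, ← div_eq_mul_inv, div_mul_eq_mul_div, le_div_iff₀ (by positivity)]
  nlinarith

lemma qpK_pos : 0 < ∫ y, qpK y := by
  rw [integral_pos_iff_support_of_nonneg (fun y => qpK_nonneg y) qpK_integrable]
  refine lt_of_lt_of_le ?_ (measure_mono (s := Set.Ioo (0:ℝ) 1) ?_)
  · simp
  · intro y hy
    simp only [Function.mem_support, qpK]
    have : Real.cos y < 1 := by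
      have := Real.cos_lt_cos_of_nonneg_of_le_pi (x := 0) (y := y) le_rfl (by linarith [hy.2, Real.pi_gt_three]) hy.1
      simpa using this
    have h1 : 0 < 1 - Real.cos y := by linarith
    have := hy.1
    positivity

lemma qp_sin_charFun (ν : Measure ℝ) [IsProbabilityMeasure ν] (r x : ℝ) :
    ∫ y, Real.sin (r * (x - y)) ∂ν = -(Complex.exp (-(r * x) * Complex.I) * charFun ν r).im := by
  rw [charFun_apply_real, ← integral_const_mul]
  have hi : Integrable (fun y : ℝ => Complex.exp (-(r * x) * Complex.I) * Complex.exp (r * y * Complex.I)) ν := by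
    refine Integrable.of_bound (C := 1) (by fun_prop) (Filter.Eventually.of_forall fun y => ?_)
    rw [← Complex.exp_add]
    have : (-(r * x) * Complex.I + r * y * Complex.I : ℂ) = ((r * (y - x) : ℝ) : ℂ) * Complex.I := by
      push_cast; ring
    rw [this, Complex.norm_exp_ofReal_mul_I]
  have := Complex.imCLM.integral_comp_comm hi
  simp only [Complex.imCLM_apply] at this
  rw [← this, ← integral_neg]
  congr 1; ext y
  rw [← Complex.exp_add]
  have : (-(r * x) * Complex.I + r * y * Complex.I : ℂ) = ((r * (y - x) : ℝ) : ℂ) * Complex.I := by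
    push_cast; ring
  rw [this, Complex.exp_ofReal_mul_I_im, ← Real.sin_neg]
  congr 1; ring

lemma qp_sin_diff (ν γ : Measure ℝ) [IsProbabilityMeasure ν] [IsProbabilityMeasure γ] (r x : ℝ) :
    |∫ y, Real.sin (r * (x - y)) ∂ν - ∫ y, Real.sin (r * (x - y)) ∂γ|
      ≤ ‖charFun ν r - charFun γ r‖ := by
  rw [qp_sin_charFun, qp_sin_charFun]
  have : -(Complex.exp (-(r * x) * Complex.I) * charFun ν r).im
      - -(Complex.exp (-(r * x) * Complex.I) * charFun γ r).im
      = -(Complex.exp (-(r * x) * Complex.I) * (charFun ν r - charFun γ r)).im := by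
    rw [mul_sub, Complex.sub_im]; ring
  rw [this, abs_neg]
  refine (Complex.abs_im_le_norm _).trans ?_
  have : (-(r * x) * Complex.I : ℂ) = ((-(r * x) : ℝ) : ℂ) * Complex.I := by push_cast; ring
  rw [norm_mul, this, Complex.norm_exp_ofReal_mul_I, one_mul]

lemma qp_sin_integrable (ν : Measure ℝ) [IsProbabilityMeasure ν] (r x : ℝ) :
    Integrable (fun y => Real.sin (r * (x - y))) ν :=
  Integrable.of_bound (C := 1) (by fun_prop) (Filter.Eventually.of_forall fun y => by
    simpa using Real.abs_sin_le_one _)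

lemma qpD_cos (ν γ : Measure ℝ) [IsProbabilityMeasure ν] [IsProbabilityMeasure γ]
    (hν : Integrable (fun y => y) ν) (hγ : Integrable (fun y => y) γ) (r x : ℝ) (hr : 0 < r) :
    |∫ z, (qpD ν z - qpD γ z) * Real.cos (r * (x - z))| ≤ ‖charFun ν r - charFun γ r‖ / r := by
  have hd : ∀ z : ℝ, HasDerivAt (fun z => -(Real.sin (r * (x - z)) / r)) (Real.cos (r * (x - z))) z := by
    intro z
    have h1 : HasDerivAt (fun z : ℝ => r * (x - z)) (-r) z := by
      simpa using ((hasDerivAt_id z).const_sub x).const_mul r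
    convert! (h1.sin.div_const r).neg using 1
    field_simp
  have a := qpD_int ν hν (fun z => Real.cos (r * (x - z))) _ (by fun_prop)
    (fun z => Real.abs_cos_le_one _) hd
  have b := qpD_int γ hγ (fun z => Real.cos (r * (x - z))) _ (by fun_prop)
    (fun z => Real.abs_cos_le_one _) hd
  simp_rw [sub_mul]
  rw [integral_sub a.1 b.1, a.2, b.2]
  simp_rw [sub_neg_eq_add]
  rw [integral_add (integrable_const _) ((qp_sin_integrable ν r x).div_const r),
    integral_add (integrable_const _) ((qp_sin_integrable γ r x).div_const r),
    integral_div, integral_div]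
  simp only [integral_const, probReal_univ, one_smul]
  have := qp_sin_diff ν γ r x
  rw [le_div_iff₀ hr, ← abs_of_pos hr, ← abs_mul, abs_of_pos hr]
  convert! this using 2
  field_simp
  ring

lemma qpD_integrable (ν : Measure ℝ) [IsProbabilityMeasure ν]
    (hν : Integrable (fun y => y) ν) : Integrable (qpD ν) := by
  have := (qpD_int ν hν (fun _ => 1) (fun z => z) (by fun_prop) (by simp) (fun z => hasDerivAt_id z)).1
  simpa using this

noncomputable def qpp (r : ℝ) : ℝ := (1 + r ^ 2) * Real.exp (-(1/4) * r ^ 2)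

lemma qpp_nonneg (r : ℝ) : 0 ≤ qpp r := by unfold qpp; positivity

lemma qpp_integrable : Integrable qpp := by
  have h1 := integrable_exp_neg_mul_sq (b := 1/4) (by norm_num)
  have h2 := integrable_rpow_mul_exp_neg_mul_sq (b := 1/4) (by norm_num) (s := 2) (by norm_num)
  refine (h1.add h2).congr (Filter.Eventually.of_forall fun r => ?_)
  simp [qpp]
  ring

lemma qp_smooth (ν γ : Measure ℝ) [IsProbabilityMeasure ν] [IsProbabilityMeasure γ]
    (hν : Integrable (fun y => y) ν) (hγ : Integrable (fun y => y) γ) (T ε : ℝ) (hT : 0 < T)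
    (hε : 0 ≤ ε)
    (h : ∀ r : ℝ, 0 < r → r ≤ T → ‖charFun ν r - charFun γ r‖ ≤ ε * r * qpp r) (x : ℝ) :
    |∫ z, (qpD ν z - qpD γ z) * qpK (T * (x - z))| ≤ (2 * ε * ∫ r, qpp r) / T := by
  set D : ℝ → ℝ := fun z => qpD ν z - qpD γ z with hD
  have iD : Integrable D := (qpD_integrable ν hν).sub (qpD_integrable γ hγ)
  have e1 : ∫ z, D z * qpK (T * (x - z)) =
      ∫ z, ∫ t in (0:ℝ)..1, D z * (2 * (1 - t) * Real.cos (t * (T * (x - z)))) := by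
    apply integral_congr_ae
    have : ∀ᵐ z : ℝ, z ≠ x := by simp [ae_iff]
    filter_upwards [this] with z hz
    rw [intervalIntegral.integral_const_mul, qpK_rep]
    exact mul_ne_zero hT.ne' (sub_ne_zero.2 hz.symm)
  have hinteg : Integrable (Function.uncurry fun (t z : ℝ) => D z * (2 * (1 - t) * Real.cos (t * (T * (x - z)))))
      ((volume.restrict (Set.uIoc (0:ℝ) 1)).prod volume) := by
    have : IsFiniteMeasure (volume.restrict (Set.uIoc (0:ℝ) 1)) := by
      rw [Set.uIoc_of_le zero_le_one]; infer_instance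
    have hb : Integrable (fun p : ℝ × ℝ => (2:ℝ) * D p.2)
        ((volume.restrict (Set.uIoc (0:ℝ) 1)).prod volume) :=
      Integrable.mul_prod (f := fun _ : ℝ => (2:ℝ)) (integrable_const _) iD
    refine Integrable.mono hb ?_ ?_
    · exact iD.aestronglyMeasurable.comp_snd.mul (by fun_prop)
    · have : ∀ᵐ p : ℝ × ℝ ∂((volume.restrict (Set.uIoc (0:ℝ) 1)).prod volume), p.1 ∈ Set.uIoc (0:ℝ) 1 := by
        exact Measure.quasiMeasurePreserving_fst.ae (ae_restrict_mem measurableSet_uIoc)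
      filter_upwards [this] with p hp
      rw [Set.uIoc_of_le zero_le_one] at hp
      simp only [Function.uncurry, norm_mul, Real.norm_eq_abs]
      have h1 : |1 - p.1| ≤ 1 := by rw [abs_le]; constructor <;> linarith [hp.1, hp.2]
      have h2 := Real.abs_cos_le_one (p.1 * (T * (x - p.2)))
      have h3 : |1 - p.1| * |Real.cos (p.1 * (T * (x - p.2)))| ≤ 1 :=
        mul_le_one₀ h1 (abs_nonneg _) h2
      calc |D p.2| * (|(2:ℝ)| * |1 - p.1| * |Real.cos (p.1 * (T * (x - p.2)))|)
          = (|(2:ℝ)| * |D p.2|) * (|1 - p.1| * |Real.cos (p.1 * (T * (x - p.2)))|) := by ring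
        _ ≤ _ := mul_le_of_le_one_right (by positivity) h3
  rw [e1, ← intervalIntegral_integral_swap hinteg]
  have hbd : ∀ t ∈ Set.Ioc (0:ℝ) 1,
      ‖∫ z, D z * (2 * (1 - t) * Real.cos (t * (T * (x - z))))‖ ≤ 2 * ε * qpp (T * t) := by
    intro t ht
    have htT : 0 < t * T := mul_pos ht.1 hT
    have : (fun z => D z * (2 * (1 - t) * Real.cos (t * (T * (x - z)))))
        = fun z => (2 * (1 - t)) * (D z * Real.cos ((t * T) * (x - z))) := by
      ext z; rw [mul_assoc t T]; ring
    rw [this, integral_const_mul, Real.norm_eq_abs, abs_mul]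
    have h1 := qpD_cos ν γ hν hγ (t * T) x htT
    have h2 := h (t * T) htT (by nlinarith [ht.2])
    have h3 : |2 * (1 - t)| ≤ 2 := by rw [abs_le]; constructor <;> linarith [ht.1, ht.2]
    have h4 : ‖charFun ν (t * T) - charFun γ (t * T)‖ / (t * T) ≤ ε * qpp (t * T) := by
      rw [div_le_iff₀ htT]; linarith
    calc |2 * (1 - t)| * |∫ z, D z * Real.cos ((t * T) * (x - z))|
        ≤ 2 * (ε * qpp (t * T)) := mul_le_mul h3 (h1.trans h4) (abs_nonneg _) (by norm_num)
      _ = _ := by rw [mul_comm t T]; ring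
  have iq : Integrable (fun t => 2 * ε * qpp (T * t)) :=
    (qpp_integrable.comp_mul_left' hT.ne').const_mul _
  have := intervalIntegral.norm_integral_le_of_norm_le zero_le_one
    (Filter.Eventually.of_forall hbd) iq.intervalIntegrable
  rw [← Real.norm_eq_abs]
  refine this.trans ?_
  rw [intervalIntegral.integral_of_le zero_le_one]
  refine (setIntegral_le_integral iq (Filter.Eventually.of_forall fun t => by
    have := qpp_nonneg (T * t)
    simp only [Pi.zero_apply]; positivity)).trans ?_
  rw [integral_const_mul, Measure.integral_comp_mul_left, abs_of_pos (inv_pos.2 hT), smul_eq_mul]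
  apply le_of_eq; field_simp

lemma qp_tail : ∃ L : ℝ, 0 < L ∧
    ∫ y, ({y : ℝ | L < |y|}).indicator qpK y ≤ (∫ y, qpK y) / 8 := by
  have hm : ∀ n : ℕ, MeasurableSet {y : ℝ | (n:ℝ) < |y|} := fun n =>
    measurableSet_lt measurable_const continuous_abs.measurable
  have h : Filter.Tendsto (fun n : ℕ => ∫ y, ({y : ℝ | (n:ℝ) < |y|}).indicator qpK y) Filter.atTop
      (nhds (∫ _ : ℝ, (0:ℝ))) := by
    refine tendsto_integral_of_dominated_convergence qpK ?_ qpK_integrable ?_ ?_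
    · exact fun n => (qpK_meas.indicator (hm n)).aestronglyMeasurable
    · refine fun n => Filter.Eventually.of_forall fun y => ?_
      refine (norm_indicator_le_norm_self _ _).trans ?_
      rw [Real.norm_eq_abs, abs_of_nonneg (qpK_nonneg y)]
    · refine Filter.Eventually.of_forall fun y => ?_
      apply tendsto_const_nhds.congr'
      obtain ⟨N, hN⟩ := exists_nat_ge |y|
      filter_upwards [Filter.eventually_ge_atTop N] with n hn
      rw [Set.indicator_of_notMem]
      simp only [Set.mem_ofPred_eq, not_lt]
      exact hN.trans (by exact_mod_cast hn)
  rw [integral_zero] at h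
  have h8 : (0:ℝ) < (∫ y, qpK y) / 8 := by have := qpK_pos; positivity
  obtain ⟨n, hn, hn1⟩ := ((h.eventually (gt_mem_nhds h8)).and (Filter.eventually_ge_atTop 1)).exists
  exact ⟨n, by exact_mod_cast hn1, hn.le⟩

lemma qp_comp (g : ℝ → ℝ) (T c : ℝ) (hT : 0 < T) :
    ∫ z, g (T * (c - z)) = (∫ y, g y) / T := by
  rw [integral_sub_left_eq_self (fun z => g (T * z)) volume c, Measure.integral_comp_mul_left,
    abs_of_pos (inv_pos.2 hT), smul_eq_mul]
  field_simp

lemma qp_comp_int (g : ℝ → ℝ) (hg : Integrable g) (T c : ℝ) (hT : 0 < T) :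
    Integrable (fun z => g (T * (c - z))) :=
  (hg.comp_mul_left' hT.ne').comp_sub_left c

lemma qp_unsmooth (D : ℝ → ℝ) (iD : Integrable D) (η p c T L A : ℝ) (hT : 0 < T)
    (hη : ∀ z, |D z| ≤ η) (hpη : p ≤ η)
    (hL : ∫ y, ({y : ℝ | L < |y|}).indicator qpK y ≤ (∫ y, qpK y) / 8)
    (hp : ∀ z, |c - z| ≤ L / T → p ≤ D z)
    (hA : ∫ z, D z * qpK (T * (c - z)) ≤ A * (∫ y, qpK y) / T) :
    p ≤ A + η / 4 := by
  have hI := qpK_pos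
  set I := ∫ y, qpK y with hIdef
  have hη0 : 0 ≤ η := (abs_nonneg _).trans (hη 0)
  have hmL : MeasurableSet {y : ℝ | L < |y|} :=
    measurableSet_lt measurable_const continuous_abs.measurable
  have iK := qp_comp_int qpK qpK_integrable T c hT
  have iKL := qp_comp_int _ (qpK_integrable.indicator hmL) T c hT
  have key : ∫ z, (p * qpK (T * (c - z)) - 2 * η * ({y : ℝ | L < |y|}).indicator qpK (T * (c - z)))
      ≤ ∫ z, D z * qpK (T * (c - z)) := by
    refine integral_mono ((iK.const_mul p).sub (iKL.const_mul _)) ?_ ?_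
    · refine iK.bdd_mul iD.aestronglyMeasurable (c := η) (Filter.Eventually.of_forall fun z => ?_)
      simpa using hη z
    · intro z
      have hK := qpK_nonneg (T * (c - z))
      simp only [Set.indicator_apply, Set.mem_ofPred_eq]
      split_ifs with h
      · have := neg_le_of_abs_le (hη z)
        nlinarith
      · have : p ≤ D z := by
          apply hp
          rw [abs_mul, abs_of_pos hT, not_lt] at h
          rw [le_div_iff₀ hT]; linarith
        nlinarith
  rw [integral_sub (iK.const_mul p) (iKL.const_mul _), integral_const_mul, integral_const_mul,
    qp_comp _ T c hT, qp_comp _ T c hT] at key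
  have k2 := key.trans hA
  have k3 : p * I - 2 * η * ∫ y, ({y : ℝ | L < |y|}).indicator qpK y ≤ A * I := by
    have := mul_le_mul_of_nonneg_right k2 hT.le
    field_simp at this
    linarith
  have k4 : p * I ≤ (A + η / 4) * I := by nlinarith
  exact le_of_mul_le_mul_right k4 hI

lemma qp_gauss_lip (x y : ℝ) (hxy : x ≤ y) :
    (ProbabilityTheory.gaussianReal 0 1).real (Set.Iio y)
      ≤ (ProbabilityTheory.gaussianReal 0 1).real (Set.Iio x) + (y - x) := by
  have hd : Set.Iio y = Set.Iio x ∪ Set.Ico x y := (Set.Iio_union_Ico_eq_Iio hxy).symm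
  have hdis : Disjoint (Set.Iio x) (Set.Ico x y) := by
    rw [Set.disjoint_left]; intro z hz hz'; exact absurd hz'.1 (not_le.2 hz)
  rw [hd, measureReal_union hdis measurableSet_Ico]
  gcongr
  rw [measureReal_def, ProbabilityTheory.gaussianReal_apply_eq_integral _ (by norm_num)]
  have h0 : 0 ≤ ∫ t in Set.Ico x y, ProbabilityTheory.gaussianPDFReal 0 1 t :=
    integral_nonneg fun t => ProbabilityTheory.gaussianPDFReal_nonneg _ _ _
  rw [ENNReal.toReal_ofReal h0]
  have := norm_setIntegral_le_of_norm_le_const (μ := volume) (s := Set.Ico x y) (C := 1)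
    (f := ProbabilityTheory.gaussianPDFReal 0 1) (by simp) (fun t _ => by
      rw [Real.norm_eq_abs, abs_of_nonneg (ProbabilityTheory.gaussianPDFReal_nonneg _ _ _)]
      rw [ProbabilityTheory.gaussianPDFReal]
      have h1 : Real.exp (-(t - 0) ^ 2 / (2 * ((1:NNReal):ℝ))) ≤ 1 := by
        rw [Real.exp_le_one_iff]
        have := sq_nonneg (t - 0)
        simp
        nlinarith
      have h2 : (√(2 * Real.pi * ((1:NNReal):ℝ)))⁻¹ ≤ 1 := by
        apply inv_le_one_of_one_le₀
        rw [Real.one_le_sqrt]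
        have := Real.pi_gt_three
        simp; linarith
      exact mul_le_one₀ h2 (Real.exp_pos _).le h1)
  rw [Real.norm_eq_abs, abs_of_nonneg h0] at this
  refine this.trans ?_
  simp [hxy]

theorem qp_esseen : ∃ K > (0:ℝ), ∀ (ν : Measure ℝ) [IsProbabilityMeasure ν],
    Integrable (fun y => y) ν → ∀ T ε : ℝ, 0 < T → 0 ≤ ε →
    (∀ r : ℝ, 0 < r → r ≤ T →
      ‖charFun ν r - charFun (ProbabilityTheory.gaussianReal 0 1) r‖ ≤ ε * r * qpp r) →
    ∀ x : ℝ, |ν.real (Set.Iio x) - (ProbabilityTheory.gaussianReal 0 1).real (Set.Iio x)|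
      ≤ K * (ε + 1 / T) := by
  obtain ⟨L, hL0, hL⟩ := qp_tail
  have hI := qpK_pos
  set I := ∫ y, qpK y with hIdef
  set P := ∫ r, qpp r with hPdef
  have hP : 0 ≤ P := integral_nonneg qpp_nonneg
  refine ⟨2 * (2 * P / I + 2 * L), by positivity, ?_⟩
  intro ν _ hν T ε hT hε h
  set γ := ProbabilityTheory.gaussianReal 0 1 with hγdef
  have hγ : Integrable (fun y : ℝ => y) γ :=
    (ProbabilityTheory.memLp_id_gaussianReal (μ := 0) (v := 1) 1).integrable (by simp)
  set D : ℝ → ℝ := fun z => ν.real (Set.Iio z) - γ.real (Set.Iio z) with hD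
  have hDe : D = fun z => qpD ν z - qpD γ z := by
    ext z; simp only [hD, qpD]; ring
  have iD : Integrable D := by
    rw [hDe]; exact (qpD_integrable ν hν).sub (qpD_integrable γ hγ)
  set A := 2 * ε * P / I with hAdef
  have hs : ∀ c, |∫ z, D z * qpK (T * (c - z))| ≤ A * I / T := by
    intro c
    have := qp_smooth ν γ hν hγ T ε hT hε h c
    rw [hDe]
    refine this.trans (le_of_eq ?_)
    rw [← hPdef, hAdef]; field_simp
  have hb : BddAbove (Set.range fun z => |D z|) := by
    refine ⟨1, ?_⟩
    rintro _ ⟨z, rfl⟩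
    have h1 : ν.real (Set.Iio z) ≤ 1 := measureReal_le_one
    have h2 : γ.real (Set.Iio z) ≤ 1 := measureReal_le_one
    have h3 : 0 ≤ ν.real (Set.Iio z) := measureReal_nonneg
    have h4 : 0 ≤ γ.real (Set.Iio z) := measureReal_nonneg
    simp only [hD]
    rw [abs_le]; constructor <;> linarith
  set η := ⨆ z, |D z| with hη
  have hle : ∀ z, |D z| ≤ η := fun z => le_ciSup hb z
  have mono : ∀ (ν' : Measure ℝ) [IsProbabilityMeasure ν'] (x y : ℝ), x ≤ y →
      ν'.real (Set.Iio x) ≤ ν'.real (Set.Iio y) := fun ν' _ x y hxy =>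
    measureReal_mono (Set.Iio_subset_Iio hxy)
  have hLT : 0 < L / T := by positivity
  have main : ∀ x, |D x| ≤ A + 2 * (L / T) + η / 4 := by
    intro x
    rw [abs_le]
    constructor
    · have := qp_unsmooth (fun z => -D z) iD.neg η (-D x - 2 * (L / T)) (x - L / T) T L A hT
        (fun z => by rw [abs_neg]; exact hle z)
        (by linarith [neg_le_of_abs_le (hle x)]) hL
        (fun z hz => by
          rw [abs_le] at hz
          have hzx : z ≤ x := by linarith
          have h1 := mono ν z x hzx
          have h2 := qp_gauss_lip z x hzx
          simp only [hD]
          linarith)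
        (by
          simp only [neg_mul]
          rw [integral_neg]
          exact (neg_le_abs _).trans (hs _))
      linarith
    · have := qp_unsmooth D iD η (D x - 2 * (L / T)) (x + L / T) T L A hT hle
        (by linarith [le_of_abs_le (hle x)]) hL
        (fun z hz => by
          rw [abs_le] at hz
          have hzx : x ≤ z := by linarith
          have h1 := mono ν x z hzx
          have h2 := qp_gauss_lip x z hzx
          simp only [hD]
          linarith)
        ((le_abs_self _).trans (hs _))
      linarith
  have hη2 : η ≤ A + 2 * (L / T) + η / 4 := ciSup_le main
  intro x
  refine (hle x).trans ?_
  have hA0 : 0 ≤ A := by positivity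
  have e1 : A = 2 * P / I * ε := by rw [hAdef]; ring
  have e2 : L / T = L * (1 / T) := by ring
  have q1 : 0 ≤ 2 * P / I * (1 / T) := by positivity
  have q2 : 0 ≤ L * ε := by positivity
  have : η ≤ 2 * (A + 2 * (L / T)) := by linarith
  refine this.trans ?_
  rw [e1, e2]
  nlinarith


lemma qp_moments (M F w : ℂ → ℂ) (R d : ℝ) (hR : 0 < R) (hd : d ≤ 1 / 2)
    (hF : DiffContOnCl ℂ F (Metric.ball 0 R)) (hw : AnalyticAt ℂ w 0)
    (hM : M =ᶠ[nhds 0] fun s => F s * Complex.exp (w s)) (hM0 : M 0 = 1)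
    (hb : ∀ s : ℂ, ‖s‖ ≤ R → ‖F s - 1‖ ≤ d) :
    ‖deriv M 0 - deriv w 0‖ ≤ 2 * d / R ∧
    ‖deriv (deriv M) 0 - (deriv M 0) ^ 2 - deriv (deriv w) 0‖ ≤ 4 * d / R ^ 2 + (2 * d / R) ^ 2 := by
  have hFa : AnalyticAt ℂ F 0 :=
    hF.differentiableOn.analyticAt (Metric.ball_mem_nhds 0 hR)
  have hG : DiffContOnCl ℂ (fun s => F s - 1) (Metric.ball 0 R) := hF.sub_const 1
  have c1 : ‖deriv F 0‖ ≤ d / R := by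
    have := Complex.norm_deriv_le_of_forall_mem_sphere_norm_le hR hG
      (fun z hz => hb z (by rw [mem_sphere_zero_iff_norm] at hz; exact hz.le))
    rwa [deriv_sub_const] at this
  have c2 : ‖deriv (deriv F) 0‖ ≤ 2 * d / R ^ 2 := by
    have := Complex.norm_iteratedDeriv_le_of_forall_mem_sphere_norm_le 2 hR hG
      (fun z hz => hb z (by rw [mem_sphere_zero_iff_norm] at hz; exact hz.le))
    rw [iteratedDeriv_succ, iteratedDeriv_one] at this
    have e : deriv (fun s => F s - 1) = deriv F := by ext s; rw [deriv_sub_const]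
    rw [e] at this
    simpa using this
  -- derivatives of M
  have ev : ∀ᶠ s in nhds (0:ℂ), deriv M s
      = (deriv F s + F s * deriv w s) * Complex.exp (w s) := by
    filter_upwards [hM.eventually_nhds, hFa.eventually_analyticAt, hw.eventually_analyticAt]
      with s h1 h2 h3
    rw [Filter.EventuallyEq.deriv_eq h1]
    have := (h2.differentiableAt.hasDerivAt.mul h3.differentiableAt.hasDerivAt.cexp).deriv
    refine this.trans ?_
    ring
  have d1 := ev.self_of_nhds
  have d2 : deriv (deriv M) 0 = (deriv (deriv F) 0 + (deriv F 0 * deriv w 0 + F 0 * deriv (deriv w) 0))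
      * Complex.exp (w 0) + (deriv F 0 + F 0 * deriv w 0) * (Complex.exp (w 0) * deriv w 0) := by
    rw [Filter.EventuallyEq.deriv_eq ev]
    have hF' := hFa.deriv.differentiableAt.hasDerivAt
    have hw' := hw.deriv.differentiableAt.hasDerivAt
    exact ((hF'.add (hFa.differentiableAt.hasDerivAt.mul hw')).mul
      hw.differentiableAt.hasDerivAt.cexp).deriv
  have e0 : F 0 * Complex.exp (w 0) = 1 := by rw [← hM0]; exact hM.self_of_nhds.symm
  set q := Complex.exp (w 0) with hq
  have hF0 : 1 / 2 ≤ ‖F 0‖ := by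
    have h1 := hb 0 (by simpa using hR.le)
    have h2 : ‖(1:ℂ)‖ ≤ ‖F 0‖ + ‖F 0 - 1‖ := by
      have := norm_sub_le (F 0) (F 0 - 1)
      simpa using this
    rw [norm_one] at h2
    linarith
  have hqn : ‖q‖ ≤ 2 := by
    have h1 : ‖F 0‖ * ‖q‖ = 1 := by rw [← norm_mul, e0, norm_one]
    nlinarith [norm_nonneg q]
  have k1 : deriv M 0 - deriv w 0 = deriv F 0 * q := by
    rw [d1]; linear_combination (deriv w 0) * e0
  have k2 : deriv (deriv M) 0 - (deriv M 0) ^ 2 - deriv (deriv w) 0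
      = deriv (deriv F) 0 * q - (deriv F 0 * q) ^ 2 := by
    have : deriv M 0 = deriv w 0 + deriv F 0 * q := by rw [← k1]; ring
    rw [this, d2]
    linear_combination (deriv (deriv w) 0 + (deriv w 0) ^ 2) * e0
  have n1 : ‖deriv F 0 * q‖ ≤ 2 * d / R := by
    rw [norm_mul]
    calc _ ≤ (d / R) * 2 := mul_le_mul c1 hqn (norm_nonneg _) ((norm_nonneg _).trans c1)
      _ = _ := by ring
  have n2 : ‖deriv (deriv F) 0 * q‖ ≤ 4 * d / R ^ 2 := by
    rw [norm_mul]
    calc _ ≤ (2 * d / R ^ 2) * 2 := mul_le_mul c2 hqn (norm_nonneg _) ((norm_nonneg _).trans c2)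
      _ = _ := by ring
  refine ⟨by rw [k1]; exact n1, ?_⟩
  rw [k2]
  refine (norm_sub_le _ _).trans (add_le_add n2 ?_)
  rw [norm_pow]
  gcongr

lemma qp_taylor (u : ℂ → ℂ) (a b : ℝ) (hu : AnalyticAt ℂ u 0) (hu1 : deriv u 0 = (a : ℂ))
    (hu2 : deriv (deriv u) 0 = (b : ℂ)) :
    ∃ K > (0:ℝ), ∃ δ > (0:ℝ), ∀ s : ℂ, ‖s‖ < δ →
      ‖u s - u 0 - a * s - b / 2 * s ^ 2‖ ≤ K * ‖s‖ ^ 3 := by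
  have h := hu.hasFPowerSeriesAt.isBigO_sub_partialSum_pow 3
  obtain ⟨K, hK, hb⟩ := h.exists_pos
  rw [Asymptotics.IsBigOWith, Metric.eventually_nhds_iff] at hb
  obtain ⟨δ, hδ, hb⟩ := hb
  refine ⟨K, hK, δ, hδ, fun s hs => ?_⟩
  have := hb (y := s) (by simpa using hs)
  simp only [FormalMultilinearSeries.partialSum, Finset.sum_range_succ, Finset.sum_range_zero,
    FormalMultilinearSeries.ofScalars_apply_eq, iteratedDeriv_succ, iteratedDeriv_zero, hu1, hu2] at this
  simp [Nat.factorial] at this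
  convert! this using 2
  ring

lemma qp_cf (M H u : ℂ → ℂ) (a b φ τ B K δ : ℝ) (hb : 0 < b) (hφ : 0 < φ) (hτ : 0 < τ)
    (hB : 0 ≤ B) (hK : 0 < K) (hδ : 0 < δ) (hδτ : δ ≤ τ) (hKδ : K * δ ≤ b / 4)
    (hH : DifferentiableOn ℂ H (Metric.ball 0 τ)) (hH0 : H 0 = 1)
    (hHB : ∀ s : ℂ, ‖s‖ < τ → ‖H s‖ ≤ B)
    (hu : ∀ s : ℂ, ‖s‖ < δ → ‖u s - u 0 - a * s - b / 2 * s ^ 2‖ ≤ K * ‖s‖ ^ 3)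
    (hM : ∀ s : ℂ, ‖s‖ < τ → M s = Complex.exp ((u s - u 0) * φ) * H s)
    (r : ℝ) (hr : 0 < r) (hrT : r < δ * √(b * φ)) :
    ‖Complex.exp (-(a * φ * (r / √(b * φ) : ℝ) * Complex.I)) * M ((r / √(b * φ) : ℝ) * Complex.I)
      - Complex.exp (-(r ^ 2 / 2))‖
      ≤ ((K * B / b + (B + 1) / τ) / √(b * φ)) * r * qpp r := by
  have hbφ : 0 < b * φ := mul_pos hb hφ
  set σ := √(b * φ) with hσ
  have hσ0 : 0 < σ := Real.sqrt_pos.2 hbφ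
  have hσ2 : σ ^ 2 = b * φ := Real.sq_sqrt hbφ.le
  set y : ℝ := r / σ with hy
  have hy0 : 0 < y := div_pos hr hσ0
  have hyδ : y < δ := by rw [hy, div_lt_iff₀ hσ0]; exact hrT
  have hry : r = y * σ := by rw [hy]; field_simp
  set s : ℂ := (y : ℂ) * Complex.I with hs
  have hns : ‖s‖ = y := by simp [hs, abs_of_pos hy0]
  have hsδ : ‖s‖ < δ := by rw [hns]; exact hyδ
  have hsτ : ‖s‖ < τ := lt_of_lt_of_le hsδ hδτ
  set R : ℂ := (u s - u 0 - a * s - b / 2 * s ^ 2) * φ with hR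
  have hRn : ‖R‖ ≤ K * y ^ 3 * φ := by
    rw [hR, norm_mul, Complex.norm_real, Real.norm_eq_abs, abs_of_pos hφ]
    have := hu s hsδ
    rw [hns] at this
    gcongr
  have hr2 : r ^ 2 = y ^ 2 * (b * φ) := by rw [hry, mul_pow, hσ2]
  have hRn2 : ‖R‖ ≤ r ^ 2 / 4 := by
    refine hRn.trans ?_
    have h1 : K * y ≤ b / 4 := (mul_le_mul_of_nonneg_left hyδ.le hK.le).trans hKδ
    have h2 : 0 ≤ y ^ 2 * φ := by positivity
    rw [hr2]
    nlinarith [mul_le_mul_of_nonneg_right h1 h2]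
  have hs2 : s ^ 2 = -(y:ℂ) ^ 2 := by rw [hs, mul_pow, Complex.I_sq]; ring
  have hexp : Complex.exp (-(a * φ * (y:ℂ) * Complex.I)) * M s
      = Complex.exp (-((r:ℂ) ^ 2 / 2)) * (Complex.exp R * H s) := by
    rw [hM s hsτ, ← mul_assoc, ← mul_assoc, ← Complex.exp_add, ← Complex.exp_add]
    congr 2
    have hr2c : (r:ℂ) ^ 2 = (y:ℂ) ^ 2 * (b * φ) := by exact_mod_cast hr2
    rw [hr2c, hR, hs2, hs]
    ring
  rw [hexp]
  have e1 : Complex.exp (-((r:ℂ) ^ 2 / 2)) * (Complex.exp R * H s) - Complex.exp (-((r:ℂ) ^ 2 / 2))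
      = Complex.exp (-((r:ℂ) ^ 2 / 2)) * ((Complex.exp R - 1) * H s + (H s - 1)) := by ring
  have e2 : ‖Complex.exp (-((r:ℂ) ^ 2 / 2))‖ = Real.exp (-(r ^ 2 / 2)) := by
    have : (-((r:ℂ) ^ 2 / 2)) = ((-(r ^ 2 / 2) : ℝ) : ℂ) := by push_cast; ring
    rw [this, Complex.norm_exp_ofReal]
  rw [e1, norm_mul, e2]
  have b1 : ‖Complex.exp R - 1‖ ≤ ‖R‖ * Real.exp ‖R‖ := by
    simpa using Complex.norm_exp_sub_sum_le_norm_mul_exp R 1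
  have b2 : ‖H s - 1‖ ≤ (B + 1) / τ * y := by
    have := Complex.dist_le_div_mul_dist_of_mapsTo_ball (f := H) (c := 0) (R₁ := τ) (R₂ := B + 1)
      (z := s) hH (fun z hz => by
        rw [mem_ball_zero_iff] at hz
        rw [hH0, mem_closedBall_iff_norm]
        refine (norm_sub_le _ _).trans ?_
        rw [norm_one]
        linarith [hHB z hz]) (by simpa using hsτ)
    rwa [hH0, dist_eq_norm, dist_zero_right, hns] at this
  have b3 : ‖(Complex.exp R - 1) * H s + (H s - 1)‖
      ≤ (K * y ^ 3 * φ * Real.exp (r ^ 2 / 4)) * B + (B + 1) / τ * y := by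
    refine (norm_add_le _ _).trans (add_le_add ?_ b2)
    rw [norm_mul]
    refine mul_le_mul (b1.trans ?_) (hHB s hsτ) (norm_nonneg _) (by positivity)
    exact mul_le_mul hRn (Real.exp_le_exp.2 hRn2) (Real.exp_pos _).le (by positivity)
  have e3 : K * y ^ 3 * φ = K / b * r ^ 3 / σ := by
    have : r ^ 3 = y ^ 3 * σ * (b * φ) := by rw [← hσ2, hry]; ring
    rw [this]; field_simp
  have e4 : Real.exp (-(r ^ 2 / 2)) * Real.exp (r ^ 2 / 4) = Real.exp (-(1/4) * r ^ 2) := by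
    rw [← Real.exp_add]; congr 1; ring
  have e5 : Real.exp (-(r ^ 2 / 2)) ≤ Real.exp (-(1/4) * r ^ 2) := by
    apply Real.exp_le_exp.2; nlinarith [sq_nonneg r]
  set E := Real.exp (-(1/4) * r ^ 2) with hE
  have hE0 : 0 < E := Real.exp_pos _
  calc Real.exp (-(r ^ 2 / 2)) * ‖(Complex.exp R - 1) * H s + (H s - 1)‖
      ≤ Real.exp (-(r ^ 2 / 2)) * ((K * y ^ 3 * φ * Real.exp (r ^ 2 / 4)) * B + (B + 1) / τ * y) := by
        gcongr
    _ = K * y ^ 3 * φ * B * (Real.exp (-(r ^ 2 / 2)) * Real.exp (r ^ 2 / 4))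
        + (B + 1) / τ * y * Real.exp (-(r ^ 2 / 2)) := by ring
    _ ≤ K * y ^ 3 * φ * B * E + (B + 1) / τ * y * E := by
        rw [e4]; gcongr
    _ = (K * B / b / σ * r * r ^ 2 + (B + 1) / τ / σ * r) * E := by
        rw [e3, hy]; ring
    _ ≤ ((K * B / b + (B + 1) / τ) / σ) * r * ((1 + r ^ 2) * E) := by
        have p1 : 0 ≤ K * B / b / σ * r * E := by positivity
        have p2 : 0 ≤ (B + 1) / τ / σ * r * r ^ 2 * E := by positivity
        have : ((K * B / b + (B + 1) / τ) / σ) * r * ((1 + r ^ 2) * E)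
          = (K * B / b / σ * r * r ^ 2 + (B + 1) / τ / σ * r) * E + K * B / b / σ * r * E
            + (B + 1) / τ / σ * r * r ^ 2 * E := by ring
        rw [this]; linarith

lemma qp_interior {α : Type*} [MeasurableSpace α] (μ : Measure α) (X : α → ℤ) (τ : ℝ)
    (h : ∀ s : ℂ, ‖s‖ ≤ τ → Integrable (fun ω => Complex.exp ((X ω : ℂ) * s)) μ)
    (x : ℝ) (hx : |x| < τ) :
    x ∈ interior (ProbabilityTheory.integrableExpSet (fun ω => (X ω : ℝ)) μ) := by
  have : Metric.ball (0:ℝ) τ ⊆ ProbabilityTheory.integrableExpSet (fun ω => (X ω : ℝ)) μ := by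
    intro t ht
    rw [mem_ball_zero_iff] at ht
    have h1 := (h (t:ℂ) (by rw [Complex.norm_real]; exact ht.le)).norm
    show Integrable _ μ
    refine h1.congr (Filter.Eventually.of_forall fun ω => ?_)
    simp [Complex.norm_exp, mul_comm]
  exact interior_maximal this Metric.isOpen_ball (by simpa using hx)

lemma qp_cdf (x : ℝ) : stdNormalCDF x = (ProbabilityTheory.gaussianReal 0 1).real (Set.Iio x) := by
  rw [measureReal_def, ProbabilityTheory.gaussianReal_apply_eq_integral _ (by norm_num)]
  rw [ENNReal.toReal_ofReal (integral_nonneg fun t => ProbabilityTheory.gaussianPDFReal_nonneg _ _ _)]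
  simp only [ProbabilityTheory.gaussianPDFReal]
  rw [integral_const_mul, stdNormalCDF]
  simp

/-- **Quasi power theorem of Hwang.**  Let `(Ω_n)` be a sequence of integer-valued random
variables whose moment generating functions `M_n(s) = E(e^{Ω_n s})` exist for `|s| ≤ τ`
and satisfy `M_n(s) = e^{u(s)φ(n) + v(s)}(1 + O(κ_n^{−1}))` uniformly for `|s| ≤ τ`,
where `u, v` are analytic on the closed disk `|s| ≤ τ` and independent of `n`, `u'(0)`
and `u''(0)` are real with `u''(0) > 0`, `φ(n) → ∞`, `φ(n) > 0` and `κ_n → ∞`.  Then the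
distribution of `Ω_n` is asymptotically Gaussian,
`P{(Ω_n − u'(0)φ(n))/√(u''(0)φ(n)) < x} = Φ_N(x) + O(1/κ_n + 1/√(φ(n)))` uniformly in
`x`, and `E(Ω_n) = u'(0)φ(n) + v'(0) + O(κ_n^{−1})`,
`V(Ω_n) = u''(0)φ(n) + v''(0) + O(κ_n^{−1})`. -/
theorem quasi_power_theorem
    {α : ℕ → Type*} [∀ n, MeasurableSpace (α n)]
    (μ : ∀ n, Measure (α n)) [∀ n, IsProbabilityMeasure (μ n)]
    (X : ∀ n, α n → ℤ) (hX : ∀ n, Measurable (X n))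
    (τ : ℝ) (hτ : 0 < τ)
    (u v : ℂ → ℂ)
    (hu : AnalyticOnNhd ℂ u (Metric.closedBall 0 τ))
    (hv : AnalyticOnNhd ℂ v (Metric.closedBall 0 τ))
    (a b c e : ℝ)
    (hu1 : deriv u 0 = (a : ℂ)) (hu2 : deriv (deriv u) 0 = (b : ℂ)) (hb : 0 < b)
    (hv1 : deriv v 0 = (c : ℂ)) (hv2 : deriv (deriv v) 0 = (e : ℂ))
    (φ : ℕ → ℝ) (hφpos : ∀ n, 0 < φ n)
    (hφ : Filter.Tendsto φ Filter.atTop Filter.atTop)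
    (κ : ℕ → ℝ) (hκ : Filter.Tendsto κ Filter.atTop Filter.atTop)
    (hMexists : ∀ n : ℕ, ∀ s : ℂ, ‖s‖ ≤ τ →
      Integrable (fun ω => Complex.exp ((X n ω : ℂ) * s)) (μ n))
    (hMasymp : ∃ C₀ : ℝ, ∀ n : ℕ, ∀ s : ℂ, ‖s‖ ≤ τ →
      ‖(∫ ω, Complex.exp ((X n ω : ℂ) * s) ∂(μ n))
          * Complex.exp (-(u s * (φ n : ℂ) + v s)) - 1‖ ≤ C₀ / κ n) :
    (∃ C > (0 : ℝ), ∃ N : ℕ, ∀ n : ℕ, N ≤ n → ∀ x : ℝ,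
      |((μ n) {ω | ((X n ω : ℝ) - a * φ n) / Real.sqrt (b * φ n) < x}).toReal
          - stdNormalCDF x|
        ≤ C * (1 / κ n + 1 / Real.sqrt (φ n))) ∧
    (∃ C > (0 : ℝ), ∃ N : ℕ, ∀ n : ℕ, N ≤ n →
      |(∫ ω, (X n ω : ℝ) ∂(μ n)) - (a * φ n + c)| ≤ C / κ n) ∧
    (∃ C > (0 : ℝ), ∃ N : ℕ, ∀ n : ℕ, N ≤ n →
      |((∫ ω, (X n ω : ℝ) ^ 2 ∂(μ n)) - (∫ ω, (X n ω : ℝ) ∂(μ n)) ^ 2)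
          - (b * φ n + e)| ≤ C / κ n) := by
  obtain ⟨C₀, hC⟩ := hMasymp
  set C1 : ℝ := max C₀ 1 with hC1
  have hC1pos : 0 < C1 := lt_of_lt_of_le one_pos (le_max_right _ _)
  obtain ⟨N, hN⟩ := Filter.eventually_atTop.1 (hκ.eventually_ge_atTop (2 * C1))
  have hκpos : ∀ n, N ≤ n → 0 < κ n := fun n hn => lt_of_lt_of_le (by positivity) (hN n hn)
  have hd : ∀ n, N ≤ n → C1 / κ n ≤ 1 / 2 := fun n hn => by
    rw [div_le_iff₀ (hκpos n hn)]; linarith [hN n hn]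
  have h0mem : (0:ℂ) ∈ Metric.closedBall (0:ℂ) τ := by simpa using hτ.le
  have hu0 := hu 0 h0mem
  have hv0 := hv 0 h0mem
  let M : ℕ → ℂ → ℂ := fun n => ProbabilityTheory.complexMGF (fun ω => (X n ω : ℝ)) (μ n)
  have hMeq : ∀ n s, M n s = ∫ ω, Complex.exp ((X n ω : ℂ) * s) ∂(μ n) := by
    intro n s
    simp only [M, ProbabilityTheory.complexMGF]
    congr 1; ext ω; rw [mul_comm]; simp
  have hM0 : ∀ n, M n 0 = 1 := by intro n; rw [hMeq]; simp
  have hinteg : ∀ n (x : ℝ), |x| < τ →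
      x ∈ interior (ProbabilityTheory.integrableExpSet (fun ω => (X n ω : ℝ)) (μ n)) := fun n x hx =>
    qp_interior (μ n) (X n) τ (hMexists n) x hx
  have hMdiff : ∀ n, DifferentiableOn ℂ (M n) (Metric.ball 0 τ) := by
    intro n
    refine ProbabilityTheory.differentiableOn_complexMGF.mono fun s hs => ?_
    rw [mem_ball_zero_iff] at hs
    exact hinteg n s.re (lt_of_le_of_lt (Complex.abs_re_le_norm s) hs)
  let w : ℕ → ℂ → ℂ := fun n s => u s * (φ n : ℂ) + v s
  let F : ℕ → ℂ → ℂ := fun n s => M n s * Complex.exp (-(w n s))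
  have hFb : ∀ n, N ≤ n → ∀ s : ℂ, ‖s‖ ≤ τ → ‖F n s - 1‖ ≤ C1 / κ n := by
    intro n hn s hs
    have h1 := hC n s hs
    rw [← hMeq] at h1
    refine h1.trans ?_
    have := hκpos n hn
    gcongr
    exact le_max_left _ _
  have hud : DifferentiableOn ℂ u (Metric.ball 0 τ) :=
    hu.differentiableOn.mono Metric.ball_subset_closedBall
  have hvd : DifferentiableOn ℂ v (Metric.ball 0 τ) :=
    hv.differentiableOn.mono Metric.ball_subset_closedBall
  have hwd : ∀ n, DifferentiableOn ℂ (w n) (Metric.ball 0 τ) := fun n =>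
    (hud.mul_const _).add hvd
  have hFd : ∀ n, DifferentiableOn ℂ (F n) (Metric.ball 0 τ) := fun n =>
    (hMdiff n).mul (hwd n).neg.cexp
  have hMF : ∀ n s, M n s = F n s * Complex.exp (w n s) := by
    intro n s
    simp only [F]
    rw [mul_assoc, ← Complex.exp_add]; simp
  have hwa : ∀ n, AnalyticAt ℂ (w n) 0 := fun n => (hu0.mul analyticAt_const).add hv0
  have hw1 : ∀ n, deriv (w n) 0 = ((a * φ n + c : ℝ) : ℂ) := by
    intro n
    have := ((hu0.differentiableAt.hasDerivAt.mul_const (φ n : ℂ)).add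
      hv0.differentiableAt.hasDerivAt).deriv
    refine this.trans ?_
    rw [hu1, hv1]; push_cast; ring
  have hw2 : ∀ n, deriv (deriv (w n)) 0 = ((b * φ n + e : ℝ) : ℂ) := by
    intro n
    have ev : deriv (w n) =ᶠ[nhds 0] fun s => deriv u s * (φ n : ℂ) + deriv v s := by
      filter_upwards [hu0.eventually_analyticAt, hv0.eventually_analyticAt] with s h1 h2
      exact ((h1.differentiableAt.hasDerivAt.mul_const (φ n : ℂ)).add
        h2.differentiableAt.hasDerivAt).deriv
    rw [ev.deriv_eq]
    have := ((hu0.deriv.differentiableAt.hasDerivAt.mul_const (φ n : ℂ)).add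
      hv0.deriv.differentiableAt.hasDerivAt).deriv
    refine this.trans ?_
    rw [hu2, hv2]; push_cast; ring
  have hR : 0 < τ / 2 := by positivity
  have hmom : ∀ n, N ≤ n → _ := fun n hn =>
    qp_moments (M n) (F n) (w n) (τ / 2) (C1 / κ n) hR (hd n hn)
      ((hFd n).diffContOnCl_ball (Metric.closedBall_subset_ball (by linarith))) (hwa n)
      (Filter.Eventually.of_forall fun s => hMF n s) (hM0 n)
      (fun s hs => hFb n hn s (by linarith))
  have hz : ∀ n, (0:ℂ).re ∈ interior (ProbabilityTheory.integrableExpSet (fun ω => (X n ω : ℝ)) (μ n)) :=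
    fun n => hinteg n _ (by simpa using hτ)
  have hE1 : ∀ n, deriv (M n) 0 = ((∫ ω, (X n ω : ℝ) ∂(μ n) : ℝ) : ℂ) := by
    intro n
    have := ProbabilityTheory.iteratedDeriv_complexMGF (hz n) 1
    rw [iteratedDeriv_one] at this
    refine this.trans ?_
    rw [← integral_complex_ofReal]
    simp
  have hE2 : ∀ n, deriv (deriv (M n)) 0 = ((∫ ω, (X n ω : ℝ) ^ 2 ∂(μ n) : ℝ) : ℂ) := by
    intro n
    have := ProbabilityTheory.iteratedDeriv_complexMGF (hz n) 2
    rw [iteratedDeriv_succ, iteratedDeriv_one] at this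
    refine this.trans ?_
    rw [← integral_complex_ofReal]
    simp
  refine ⟨?_, ?_, ?_⟩
  · -- the central limit theorem
    obtain ⟨K, hK, δ₀, hδ₀, htay⟩ := qp_taylor u a b hu0 hu1 hu2
    obtain ⟨K₁, hK₁, hess⟩ := qp_esseen
    set δ : ℝ := min (min δ₀ τ) (b / (4 * K)) with hδdef
    have hδ : 0 < δ := by positivity
    have hδ1 : δ ≤ δ₀ := (min_le_left _ _).trans (min_le_left _ _)
    have hδτ : δ ≤ τ := (min_le_left _ _).trans (min_le_right _ _)
    have hKδ : K * δ ≤ b / 4 := by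
      have h1 : δ ≤ b / (4 * K) := min_le_right _ _
      rw [le_div_iff₀ (by positivity)] at h1
      linarith
    -- bound for `exp v`
    obtain ⟨V, hV⟩ : ∃ V, ∀ s ∈ Metric.closedBall (0:ℂ) τ, ‖Complex.exp (v s)‖ ≤ V :=
      (isCompact_closedBall (0:ℂ) τ).exists_bound_of_continuousOn
        (Complex.continuous_exp.comp_continuousOn hv.continuousOn)
    have hVnn : 0 ≤ V := (norm_nonneg _).trans (hV 0 h0mem)
    set V' := ‖Complex.exp (-(v 0))‖ with hV'
    set B : ℝ := 3 / 2 * V * (2 * V') with hBdef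
    have hB : 0 ≤ B := by positivity
    let H : ℕ → ℂ → ℂ := fun n s => M n s * Complex.exp (-((u s - u 0) * (φ n : ℂ)))
    have hHd : ∀ n, DifferentiableOn ℂ (H n) (Metric.ball 0 τ) := fun n =>
      (hMdiff n).mul ((hud.sub_const (u 0)).mul_const _).neg.cexp
    have hH0 : ∀ n, H n 0 = 1 := by intro n; simp [H, hM0]
    have hMH : ∀ n s, M n s = Complex.exp ((u s - u 0) * (φ n : ℂ)) * H n s := by
      intro n s
      simp only [H]
      rw [mul_left_comm, ← Complex.exp_add]; simp
    have hHB : ∀ n, N ≤ n → ∀ s : ℂ, ‖s‖ < τ → ‖H n s‖ ≤ B := by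
      intro n hn s hs
      have hH : H n s = F n s * Complex.exp (v s) * Complex.exp (u 0 * (φ n : ℂ)) := by
        simp only [H, F, w]
        rw [mul_assoc, mul_assoc, ← Complex.exp_add, ← Complex.exp_add]
        congr 2; ring
      have f1 : ‖F n s‖ ≤ 3 / 2 := by
        have h1 := (hFb n hn s hs.le).trans (hd n hn)
        have h2 := norm_add_le (F n s - 1) 1
        rw [sub_add_cancel, norm_one] at h2
        linarith
      have f2 : 1 / 2 ≤ ‖F n 0‖ := by
        have h1 := (hFb n hn 0 (by simpa using hτ.le)).trans (hd n hn)
        have h2 := norm_sub_le (F n 0) (F n 0 - 1)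
        rw [sub_sub_cancel, norm_one] at h2
        linarith
      have f3 : F n 0 * Complex.exp (u 0 * (φ n : ℂ)) = Complex.exp (-(v 0)) := by
        simp only [F, w]
        rw [hM0, one_mul, ← Complex.exp_add]
        congr 1; ring
      have f4 : ‖Complex.exp (u 0 * (φ n : ℂ))‖ ≤ 2 * V' := by
        rw [hV', ← f3, norm_mul]
        nlinarith [norm_nonneg (Complex.exp (u 0 * (φ n : ℂ)))]
      rw [hH, norm_mul, norm_mul]
      have f5 := hV s (by simpa using hs.le)
      rw [hBdef]
      gcongr
    set Q : ℝ := K * B / b + (B + 1) / τ with hQ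
    have hQ0 : 0 < Q := by positivity
    have hsb : 0 < √b := Real.sqrt_pos.2 hb
    refine ⟨K₁ * (Q + 2 / δ) / √b, by positivity, N, fun n hn x => ?_⟩
    have hφn := hφpos n
    have hbφ : 0 < b * φ n := mul_pos hb hφn
    set σ := √(b * φ n) with hσ
    have hσ0 : 0 < σ := Real.sqrt_pos.2 hbφ
    set Y : α n → ℝ := fun ω => ((X n ω : ℝ) - a * φ n) / σ with hY
    have hXm : Measurable fun ω => (X n ω : ℝ) := (measurable_from_top (f := fun k : ℤ => (k:ℝ))).comp (hX n)
    have hYm : Measurable Y := (hXm.sub_const _).div_const _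
    have hprob : IsProbabilityMeasure ((μ n).map Y) :=
      Measure.isProbabilityMeasure_map hYm.aemeasurable
    have hXi : Integrable (fun ω => (X n ω : ℝ)) (μ n) := by
      have := ProbabilityTheory.integrable_pow_of_mem_interior_integrableExpSet (hz n) 1
      simpa using this
    have hYi : Integrable (fun y => y) ((μ n).map Y) := by
      rw [integrable_map_measure (by fun_prop) hYm.aemeasurable]
      exact (hXi.sub (integrable_const _)).div_const _
    have hcf : ∀ r : ℝ, charFun ((μ n).map Y) r
        = Complex.exp (-(a * φ n * (r / σ : ℝ) * Complex.I)) * M n ((r / σ : ℝ) * Complex.I) := by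
      intro r
      rw [charFun_apply_real, integral_map hYm.aemeasurable (by fun_prop), hMeq, ← integral_const_mul]
      congr 1; ext ω
      rw [← Complex.exp_add]
      congr 1
      simp only [hY]
      push_cast
      field_simp
      ring
    have hT : 0 < δ * σ / 2 := by positivity
    have hfin := hess ((μ n).map Y) hYi (δ * σ / 2) (Q / σ) hT (by positivity) (fun r hr hrT => by
      have := qp_cf (M n) (H n) u a b (φ n) τ B K δ hb hφn hτ hB hK hδ hδτ hKδ (hHd n) (hH0 n)
        (hHB n hn) (fun s hs => htay s (lt_of_lt_of_le hs hδ1)) (fun s _ => hMH n s) r hr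
        (by have : 0 < δ * σ := by positivity
            exact lt_of_le_of_lt hrT (half_lt_self this))
      rw [hcf, ProbabilityTheory.charFun_gaussianReal]
      convert! this using 3
      congr 1
      simp) x
    have hset : ((μ n) {ω | ((X n ω : ℝ) - a * φ n) / σ < x}).toReal
        = ((μ n).map Y).real (Set.Iio x) := by
      rw [measureReal_def, Measure.map_apply hYm measurableSet_Iio]
      rfl
    rw [hset, qp_cdf]
    refine hfin.trans ?_
    have hσe : σ = √b * √(φ n) := by rw [hσ, Real.sqrt_mul hb.le]
    have hsφ : 0 < √(φ n) := Real.sqrt_pos.2 hφn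
    have e1 : K₁ * (Q / σ + 1 / (δ * σ / 2)) = K₁ * (Q + 2 / δ) / √b * (1 / √(φ n)) := by
      rw [hσe]; field_simp
    rw [e1]
    have hk := hκpos n hn
    have : 0 ≤ 1 / κ n := by positivity
    apply mul_le_mul_of_nonneg_left _ (by positivity)
    linarith
  · refine ⟨4 * C1 / τ, by positivity, N, fun n hn => ?_⟩
    have h1 := (hmom n hn).1
    rw [hE1, hw1, ← Complex.ofReal_sub, Complex.norm_real, Real.norm_eq_abs] at h1
    refine h1.trans (le_of_eq ?_)
    have := hκpos n hn
    field_simp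
    ring
  · refine ⟨24 * C1 / τ ^ 2, by positivity, N, fun n hn => ?_⟩
    have h1 := (hmom n hn).2
    rw [hE1, hE2, hw2, ← Complex.ofReal_pow, ← Complex.ofReal_sub, ← Complex.ofReal_sub,
      Complex.norm_real, Real.norm_eq_abs] at h1
    refine h1.trans ?_
    have hk := hκpos n hn
    have hdn := hd n hn
    have hd0 : 0 < C1 / κ n := by positivity
    have e1 : 4 * (C1 / κ n) / (τ / 2) ^ 2 + (2 * (C1 / κ n) / (τ / 2)) ^ 2
        = (16 * (C1 / κ n) + 16 * (C1 / κ n) ^ 2) / τ ^ 2 := by field_simp; ring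
    have e2 : 24 * C1 / τ ^ 2 / κ n = (24 * (C1 / κ n)) / τ ^ 2 := by field_simp
    rw [e1, e2]
    gcongr
    nlinarith
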